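/- If m > 14j, then under optimal play the (j,m)-balanced redistricting game ends in a tie: each player wins exactly j bins. -/

import Mathlib

/-- A move in the `(j,m)`-balanced redistricting game: a color
(`true` = white, `false` = black) together with one of the `2*j` bins. -/
abbrev Move (j : ℕ) := Bool × Fin (2*j)

/-- A strategy: given the history of moves (most recent first), produce a move. -/
abbrev Strat (j : ℕ) := List (Move j) → Move j

/-- The history after `n` moves when Player 1 (moving at even steps) plays `s1`
and Player 2 plays `s2`.  Most recent move first. -/
def hist (j : ℕ) (s1 s2 : Strat j) : ℕ → List (Move j)
  | 0 => []
  | n+1 =>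
      (if n % 2 = 0 then s1 (hist j s1 s2 n) else s2 (hist j s1 s2 n)) :: hist j s1 s2 n

/-- A move `mv` is legal after history `h`: a ball of that color remains
(there are `j*(2*m+1)` balls of each color) and the chosen bin is not full
(each bin has capacity `2*m+1`). -/
def legalMove (j m : ℕ) (h : List (Move j)) (mv : Move j) : Prop :=
  h.countP (fun x => x.1 == mv.1) < j * (2*m+1) ∧
  h.countP (fun x => x.2 == mv.2) < 2*m+1

/-- Player 1 always plays legally throughout the `2*j*(2*m+1)` moves. -/
def p1Legal (j m : ℕ) (s1 s2 : Strat j) : Prop :=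
  ∀ n < 2*j*(2*m+1), n % 2 = 0 →
    legalMove j m (hist j s1 s2 n) (s1 (hist j s1 s2 n))

/-- Player 2 always plays legally throughout the `2*j*(2*m+1)` moves. -/
def p2Legal (j m : ℕ) (s1 s2 : Strat j) : Prop :=
  ∀ n < 2*j*(2*m+1), n % 2 = 1 →
    legalMove j m (hist j s1 s2 n) (s2 (hist j s1 s2 n))

/-- Number of white balls in bin `b` according to history `h`. -/
def whitesIn (j : ℕ) (h : List (Move j)) (b : Fin (2*j)) : ℕ :=
  h.countP (fun x => x.1 == true && x.2 == b)

/-- Number of black balls in bin `b` according to history `h`. -/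
def blacksIn (j : ℕ) (h : List (Move j)) (b : Fin (2*j)) : ℕ :=
  h.countP (fun x => x.1 == false && x.2 == b)

/-- The final history: all `2*j*(2*m+1)` balls have been placed. -/
def finalHist (j m : ℕ) (s1 s2 : Strat j) : List (Move j) :=
  hist j s1 s2 (2*j*(2*m+1))

/-- Number of majority-white bins (at least `m+1` white balls). -/
def majWhiteCount (j m : ℕ) (h : List (Move j)) : ℕ :=
  (Finset.univ.filter (fun b : Fin (2*j) => m+1 ≤ whitesIn j h b)).card

/-- Number of majority-black bins (at least `m+1` black balls). -/
def majBlackCount (j m : ℕ) (h : List (Move j)) : ℕ :=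
  (Finset.univ.filter (fun b : Fin (2*j) => m+1 ≤ blacksIn j h b)).card

/-- Combinatorial core -/
def rgInc {ι : Type} [DecidableEq ι] (f : ι → ℕ) (b : ι) : ι → ℕ :=
  fun i => f i + if i = b then 1 else 0

theorem rgInc_self {ι : Type} [DecidableEq ι] (f : ι → ℕ) (b : ι) : rgInc f b b = f b + 1 := by
  simp [rgInc]

theorem rgInc_ne {ι : Type} [DecidableEq ι] (f : ι → ℕ) {b i : ι} (h : i ≠ b) :
    rgInc f b i = f i := by
  simp [rgInc, h]

theorem rgInc_le {ι : Type} [DecidableEq ι] (f : ι → ℕ) (b i : ι) : f i ≤ rgInc f b i := by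
  simp [rgInc]

theorem rgInc_sum {ι : Type} [Fintype ι] [DecidableEq ι] (f : ι → ℕ) (b : ι) :
    ∑ i, rgInc f b i = ∑ i, f i + 1 := by
  simp [rgInc, Finset.sum_add_distrib]

def rgPos {ι : Type} [Fintype ι] (w k : ι → ℕ) : Finset ι := Finset.univ.filter (fun b => k b < w b)

def rgSup {ι : Type} [Fintype ι] (v : ι → ℕ) : Finset ι := Finset.univ.filter (fun b => 0 < v b)

theorem rg_stepW {ι : Type} [Fintype ι] [DecidableEq ι] (w k : ι → ℕ) (c : ι) :
    (rgPos w k).card ≤ (rgPos (rgInc w c) k).card ∧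
      (rgPos k (rgInc w c)).card ≤ (rgPos k w).card := by
  constructor
  · apply Finset.card_le_card
    intro b hb
    simp only [rgPos, Finset.mem_filter, Finset.mem_univ, true_and] at hb ⊢
    have := rgInc_le w c b
    omega
  · apply Finset.card_le_card
    intro b hb
    simp only [rgPos, Finset.mem_filter, Finset.mem_univ, true_and] at hb ⊢
    have := rgInc_le w c b
    omega

theorem rg_stepB {ι : Type} [Fintype ι] [DecidableEq ι] (w k : ι → ℕ) (c : ι) :
    ((rgPos w k).card ≤ (rgPos w (rgInc k c)).card ∧
      (rgPos (rgInc k c) w).card ≤ (rgPos k w).card + 1) ∨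
    ((rgPos w k).card ≤ (rgPos w (rgInc k c)).card + 1 ∧
      (rgPos (rgInc k c) w).card ≤ (rgPos k w).card ∧ w c = rgInc k c c) := by
  by_cases h : w c = k c + 1
  · right
    refine ⟨?_, ?_, by rw [rgInc_self]; exact h⟩
    · have : rgPos w k ⊆ insert c (rgPos w (rgInc k c)) := by
        intro b hb
        by_cases hbc : b = c
        · simp [hbc]
        · simp only [rgPos, Finset.mem_filter, Finset.mem_univ, true_and, Finset.mem_insert] at hb ⊢
          rw [rgInc_ne k hbc]; exact Or.inr hb
      exact (Finset.card_le_card this).trans (Finset.card_insert_le _ _)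
    · apply Finset.card_le_card
      intro b hb
      by_cases hbc : b = c
      · subst hbc
        simp only [rgPos, Finset.mem_filter, Finset.mem_univ, true_and, rgInc_self] at hb ⊢
        omega
      · simp only [rgPos, Finset.mem_filter, Finset.mem_univ, true_and] at hb ⊢
        rwa [rgInc_ne k hbc] at hb
  · left
    constructor
    · apply Finset.card_le_card
      intro b hb
      by_cases hbc : b = c
      · subst hbc
        simp only [rgPos, Finset.mem_filter, Finset.mem_univ, true_and, rgInc_self] at hb ⊢
        omega
      · simp only [rgPos, Finset.mem_filter, Finset.mem_univ, true_and] at hb ⊢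
        rwa [rgInc_ne k hbc]
    · have : rgPos (rgInc k c) w ⊆ insert c (rgPos k w) := by
        intro b hb
        by_cases hbc : b = c
        · simp [hbc]
        · simp only [rgPos, Finset.mem_filter, Finset.mem_univ, true_and, Finset.mem_insert] at hb ⊢
          rw [rgInc_ne k hbc] at hb; exact Or.inr hb
      exact (Finset.card_le_card this).trans (Finset.card_insert_le _ _)

theorem rg_zeroW {ι : Type} [Fintype ι] [DecidableEq ι] (w k : ι → ℕ) (c : ι) (hc : w c = k c) :
    (rgPos w k).card + 1 ≤ (rgPos (rgInc w c) k).card := by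
  have hn : c ∉ rgPos w k := by simp [rgPos, hc]
  rw [← Finset.card_insert_of_notMem hn]
  apply Finset.card_le_card
  intro b hb
  by_cases hbc : b = c
  · subst hbc
    simp only [rgPos, Finset.mem_filter, Finset.mem_univ, true_and, rgInc_self]; omega
  · simp only [rgPos, Finset.mem_filter, Finset.mem_univ, true_and, Finset.mem_insert, hbc,
      false_or] at hb ⊢
    rwa [rgInc_ne w hbc]

/-- hold phase, opponent to move -/
def rgInv2 {ι : Type} [Fintype ι] (j m : ℕ) (w k : ι → ℕ) : Prop :=
  ∃ A : Finset ι, A.card = j ∧ (∀ b ∈ A, m + 1 ≤ w b ∨ k b < w b) ∧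
    ∑ i, w i + 2 * ∑ b ∈ A, (m + 1 - w b) ≤ j * (2 * m + 1)

/-- hold phase, Player 1 to move -/
def rgMid2 {ι : Type} [Fintype ι] (j m : ℕ) (w k : ι → ℕ) : Prop :=
  ∃ A : Finset ι, ∃ b0 : ι, A.card = j ∧
    (∀ b ∈ A, m + 1 ≤ w b ∨ k b < w b ∨ (b = b0 ∧ k b = w b)) ∧
    ∑ i, w i + 2 * ∑ b ∈ A, (m + 1 - w b) ≤ j * (2 * m + 1) + 1

theorem rg_inv2_W {ι : Type} [Fintype ι] [DecidableEq ι] {j m : ℕ} {w k : ι → ℕ}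
    (h : rgInv2 j m w k) (c : ι) : rgMid2 j m (rgInc w c) k := by
  obtain ⟨A, hA, hp, hs⟩ := h
  refine ⟨A, c, hA, ?_, ?_⟩
  · intro b hb
    have := rgInc_le w c b
    have := hp b hb
    omega
  · rw [rgInc_sum]
    have : ∑ b ∈ A, (m + 1 - rgInc w c b) ≤ ∑ b ∈ A, (m + 1 - w b) := by
      apply Finset.sum_le_sum
      intro b _
      have := rgInc_le w c b
      omega
    omega

theorem rg_inv2_B {ι : Type} [Fintype ι] [DecidableEq ι] {j m : ℕ} {w k : ι → ℕ}
    (h : rgInv2 j m w k) (c : ι) : rgMid2 j m w (rgInc k c) := by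
  obtain ⟨A, hA, hp, hs⟩ := h
  refine ⟨A, c, hA, ?_, by omega⟩
  intro b hb
  by_cases hbc : b = c
  · subst hbc
    rw [rgInc_self]
    have := hp b hb
    simp only [true_and]
    omega
  · rw [rgInc_ne k hbc]
    have := hp b hb
    omega

/-- reply in the hold phase -/
theorem rg_mid2_reply {ι : Type} [Fintype ι] [DecidableEq ι] {j m : ℕ} {w k : ι → ℕ}
    (h : rgMid2 j m w k) (hcap : ∀ b, w b + k b ≤ 2 * m + 1)
    (hw : ∑ i, w i ≤ j * (2 * m + 1)) (hk : ∑ i, k i ≤ j * (2 * m + 1))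
    (hcard : Fintype.card ι = 2 * j)
    (hno : ∑ i, w i + ∑ i, k i < 2 * (j * (2 * m + 1))) :
    ∃ b, w b + k b < 2 * m + 1 ∧
      ((∑ i, w i < j * (2 * m + 1) ∧ rgInv2 j m (rgInc w b) k) ∨
       (∑ i, k i < j * (2 * m + 1) ∧ rgInv2 j m w (rgInc k b))) := by
  obtain ⟨A, b0, hA, hp, hs⟩ := h
  by_cases hz : ∑ b ∈ A, (m + 1 - w b) = 0
  · have hz' : ∀ b ∈ A, m + 1 ≤ w b := by
      intro b hb
      have := Finset.sum_eq_zero_iff.mp hz b hb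
      omega
    have hex : ∃ b, w b + k b < 2 * m + 1 := by
      by_contra hcon
      push Not at hcon
      have h1 : ∑ b : ι, (2 * m + 1) ≤ ∑ b, (w b + k b) := Finset.sum_le_sum fun b _ => hcon b
      have h2 : ∑ b, (w b + k b) = ∑ b, w b + ∑ b, k b := Finset.sum_add_distrib
      rw [h2] at h1
      simp only [Finset.sum_const, Finset.card_univ, hcard, smul_eq_mul] at h1
      rw [mul_assoc] at h1
      omega
    obtain ⟨b, hb⟩ := hex
    refine ⟨b, hb, ?_⟩
    by_cases hw' : ∑ i, w i < j * (2 * m + 1)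
    · left
      refine ⟨hw', A, hA, ?_, ?_⟩
      · intro i hi
        have := hz' i hi
        have := rgInc_le w b i
        omega
      · have : ∑ i ∈ A, (m + 1 - rgInc w b i) = 0 := by
          apply Finset.sum_eq_zero
          intro i hi
          have := hz' i hi
          have := rgInc_le w b i
          omega
        rw [this, rgInc_sum]
        omega
    · right
      refine ⟨by omega, A, hA, fun i hi => Or.inl (hz' i hi), by omega⟩
  · have key : ∃ b ∈ A, w b ≤ m ∧ w b + k b < 2 * m + 1 ∧
        (∀ i ∈ A, i ≠ b → m + 1 ≤ w i ∨ k i < w i) ∧ k b ≤ w b := by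
      by_cases hb0 : b0 ∈ A ∧ w b0 ≤ m ∧ k b0 = w b0
      · refine ⟨b0, hb0.1, hb0.2.1, by omega, ?_, by omega⟩
        intro i hi hne
        have := hp i hi
        tauto
      · have : ∃ b ∈ A, m + 1 - w b ≠ 0 := by
          by_contra hcon
          push Not at hcon
          exact hz (Finset.sum_eq_zero hcon)
        have hall : ∀ i ∈ A, m + 1 ≤ w i ∨ k i < w i := by
          intro i hi
          rcases hp i hi with h1 | h1 | ⟨h1, h2⟩
          · exact Or.inl h1
          · exact Or.inr h1
          · subst h1
            left
            by_contra hc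
            exact hb0 ⟨hi, by omega, h2⟩
        obtain ⟨b, hb, hne⟩ := this
        have := hall b hb
        exact ⟨b, hb, by omega, by omega, fun i hi _ => hall i hi, by omega⟩
    obtain ⟨b, hb, hbm, hbc, hoth, hkb⟩ := key
    have e1 := Finset.add_sum_erase A (fun i => m + 1 - w i) hb
    have e2 := Finset.add_sum_erase A (fun i => m + 1 - rgInc w b i) hb
    have e3 : ∑ i ∈ A.erase b, (m + 1 - rgInc w b i) = ∑ i ∈ A.erase b, (m + 1 - w i) := by
      apply Finset.sum_congr rfl
      intro i hi
      rw [rgInc_ne w (Finset.ne_of_mem_erase hi)]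
    simp only [rgInc_self] at e1 e2
    refine ⟨b, hbc, Or.inl ⟨by omega, A, hA, ?_, ?_⟩⟩
    · intro i hi
      by_cases hib : i = b
      · subst hib
        rw [rgInc_self]; omega
      · rw [rgInc_ne w hib]; exact hoth i hi hib
    · rw [rgInc_sum]
      omega

theorem rg_choose {ι : Type} [Fintype ι] [DecidableEq ι] {j m : ℕ} {w k wm : ι → ℕ}
    (h1 : ∀ b, wm b ≤ w b) (h2 : ∀ b, 0 < wm b → k b < w b) (h5 : (rgSup wm).card ≤ j)
    (hP : j ≤ (rgPos w k).card) (hc : ∀ b, wm b ≤ m + 1) :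
    ∃ A : Finset ι, A.card = j ∧ (∀ b ∈ A, k b < w b) ∧
      ∑ b ∈ A, (m + 1 - w b) + ∑ b, wm b ≤ j * (m + 1) := by
  have hsub : rgSup wm ⊆ rgPos w k := by
    intro b hb
    simp only [rgSup, rgPos, Finset.mem_filter, Finset.mem_univ, true_and] at hb ⊢
    exact h2 b hb
  obtain ⟨A, hA1, hA2, hA⟩ := Finset.exists_subsuperset_card_eq hsub h5 hP
  refine ⟨A, hA, ?_, ?_⟩
  · intro b hb
    have := hA2 hb
    simpa [rgPos] using this
  · have e : ∑ b ∈ A, wm b = ∑ b, wm b := by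
      apply Finset.sum_subset (Finset.subset_univ A)
      intro b _ hb
      by_contra hne
      exact hb (hA1 (by simp only [rgSup, Finset.mem_filter, Finset.mem_univ, true_and]; omega))
    rw [← e, ← Finset.sum_add_distrib]
    calc ∑ b ∈ A, (m + 1 - w b + wm b) ≤ ∑ b ∈ A, (m + 1) := by
          apply Finset.sum_le_sum
          intro b _
          have := h1 b
          have := hc b
          omega
      _ = j * (m + 1) := by simp [hA]

theorem rg_exchange {ι : Type} [DecidableEq ι] (w : ι → ℕ) (P : Finset ι) (n : ℕ) (hn : n ≤ P.card) :
    ∃ B ⊆ P, B.card = n ∧ ∀ b ∈ B, ∀ c ∈ P \ B, w c ≤ w b := by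
  induction n with
  | zero => exact ⟨∅, by simp, by simp, by simp⟩
  | succ n ih =>
    obtain ⟨B, hB, hc, hx⟩ := ih (by omega)
    have hne : (P \ B).Nonempty := by
      rw [← Finset.card_pos, Finset.card_sdiff_of_subset hB]
      omega
    obtain ⟨a, ha, hmax⟩ := Finset.exists_max_image (P \ B) w hne
    have ha' := Finset.mem_sdiff.mp ha
    refine ⟨insert a B, Finset.insert_subset ha'.1 hB, ?_, ?_⟩
    · rw [Finset.card_insert_of_notMem ha'.2, hc]
    · intro b hb c hcm
      have hc1 : c ∈ P \ B := by
        simp only [Finset.mem_sdiff, Finset.mem_insert, not_or] at hcm ⊢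
        exact ⟨hcm.1, hcm.2.2⟩
      rcases Finset.mem_insert.mp hb with rfl | hb
      · exact hmax c hc1
      · exact hx b hb c hc1

theorem rg_sum_wm {ι : Type} [Fintype ι] [DecidableEq ι] {wm k : ι → ℕ} (S : Finset ι)
    (h3 : ∀ b ∈ S, wm b ≤ k b + 1) :
    ∑ b ∈ S, wm b ≤ ∑ b, k b + (S ∩ rgSup wm).card := by
  have e : ∑ b ∈ S ∩ rgSup wm, wm b = ∑ b ∈ S, wm b := by
    apply Finset.sum_subset Finset.inter_subset_left
    intro b hb hn
    by_contra hne
    apply hn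
    simp only [rgSup, Finset.mem_inter, Finset.mem_filter, Finset.mem_univ, true_and]
    exact ⟨hb, by omega⟩
  rw [← e]
  calc ∑ b ∈ S ∩ rgSup wm, wm b ≤ ∑ b ∈ S ∩ rgSup wm, (k b + 1) :=
        Finset.sum_le_sum fun b hb => h3 b (Finset.mem_inter.mp hb).1
    _ = ∑ b ∈ S ∩ rgSup wm, k b + (S ∩ rgSup wm).card := by
        simp [Finset.sum_add_distrib]
    _ ≤ _ := by
        gcongr
        exact Finset.subset_univ _

theorem rg_choose2 {ι : Type} [Fintype ι] [DecidableEq ι] {j m : ℕ} {w k wm : ι → ℕ} {z : ι}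
    (hcard : Fintype.card ι = 2 * j) (hm : 14 * j < m)
    (h1 : ∀ b, wm b ≤ w b) (h2 : ∀ b, 0 < wm b → k b < w b)
    (h3 : ∀ b, b ≠ z → wm b ≤ k b + 1) (h4 : 0 < wm z)
    (h5 : (rgSup wm).card ≤ j) (h6 : ∑ b, w b + ∑ b, k b + 1 = 2 * ∑ b, wm b)
    (hP : j ≤ (rgPos w k).card) (hT : ∑ b, wm b = 6 * j) : rgInv2 j m w k := by
  have hwm : ∀ b, w b ≤ m := by
    intro b
    have : w b ≤ ∑ b, w b := Finset.single_le_sum (f := w) (fun _ _ => Nat.zero_le _) (Finset.mem_univ b)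
    omega
  by_cases hK : j ≤ ∑ b, k b + 1
  · obtain ⟨A, hA, hp, hs⟩ := rg_choose (m := m) h1 h2 h5 hP
      (fun b => by have := h1 b; have := hwm b; omega)
    refine ⟨A, hA, fun b hb => Or.inr (hp b hb), ?_⟩
    have : j * (2 * m + 1) + j = 2 * (j * (m + 1)) := by ring
    omega
  · have hzP : z ∈ rgPos w k := by
      simp only [rgPos, Finset.mem_filter, Finset.mem_univ, true_and]; exact h2 z h4
    have hzM : z ∈ rgSup wm := by
      simp only [rgSup, Finset.mem_filter, Finset.mem_univ, true_and]; exact h4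
    have hPc : ((rgPos w k).erase z).card = (rgPos w k).card - 1 := Finset.card_erase_of_mem hzP
    obtain ⟨B, hB, hBc, hx⟩ := rg_exchange w ((rgPos w k).erase z) (j - 1) (by omega)
    have hzB : z ∉ B := fun h => by simpa using hB h
    set G := (rgPos w k).erase z \ B with hG
    have hGc : G.card ≤ j := by
      rw [hG, Finset.card_sdiff_of_subset hB, hPc, hBc]
      have : (rgPos w k).card ≤ 2 * j := by rw [← hcard]; exact Finset.card_le_univ _
      omega
    have hGy : ∑ c ∈ G, w c ≤ 2 * ∑ b ∈ B, w b := by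
      have a1 : ∀ c ∈ G, (j - 1) * w c ≤ ∑ b ∈ B, w b := by
        intro c hc
        calc (j - 1) * w c = ∑ b ∈ B, w c := by simp [hBc]
          _ ≤ _ := Finset.sum_le_sum fun b hb => hx b hb c hc
      have a2 : (j - 1) * ∑ c ∈ G, w c ≤ j * ∑ b ∈ B, w b := by
        rw [Finset.mul_sum]
        calc ∑ c ∈ G, (j - 1) * w c ≤ ∑ c ∈ G, ∑ b ∈ B, w b := Finset.sum_le_sum a1
          _ = G.card * ∑ b ∈ B, w b := by simp
          _ ≤ _ := Nat.mul_le_mul_right _ hGc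
      have a3 : j * ∑ b ∈ B, w b ≤ (2 * (j - 1)) * ∑ b ∈ B, w b :=
        Nat.mul_le_mul_right _ (by omega)
      have a4 : (j - 1) * ∑ c ∈ G, w c ≤ (j - 1) * (2 * ∑ b ∈ B, w b) := by
        calc _ ≤ _ := a2.trans a3
          _ = _ := by ring
      exact Nat.le_of_mul_le_mul_left a4 (by omega)
    have hmu : ∑ b ∈ Finset.univ.erase z, wm b ≤ ∑ b, k b + (j - 1) := by
      have b1 := rg_sum_wm (wm := wm) (k := k) (Finset.univ.erase z)
        (fun b hb => h3 b (Finset.ne_of_mem_erase hb))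
      have b2 : Finset.univ.erase z ∩ rgSup wm = (rgSup wm).erase z := by
        ext b; simp
      rw [b2, Finset.card_erase_of_mem hzM] at b1
      omega
    have hT2 := Finset.add_sum_erase Finset.univ wm (Finset.mem_univ z)
    have hwz := h1 z
    have s1 := Finset.sum_filter_add_sum_filter_not Finset.univ (fun b => k b < w b) w
    have s2 := Finset.add_sum_erase (rgPos w k) w hzP
    have s3 : ∑ b ∈ G, w b + ∑ b ∈ B, w b = ∑ b ∈ (rgPos w k).erase z, w b :=
      Finset.sum_sdiff hB
    have s4 : ∑ b ∈ Finset.univ.filter (fun b => ¬ k b < w b), w b ≤ ∑ b, k b := by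
      calc _ ≤ ∑ b ∈ Finset.univ.filter (fun b => ¬ k b < w b), k b := by
            apply Finset.sum_le_sum
            intro b hb
            have := (Finset.mem_filter.mp hb).2
            omega
        _ ≤ _ := Finset.sum_le_sum_of_subset (Finset.subset_univ _)
    change ∑ b ∈ rgPos w k, w b + _ = _ at s1
    refine ⟨insert z B, ?_, ?_, ?_⟩
    · rw [Finset.card_insert_of_notMem hzB, hBc]; omega
    · intro b hb
      right
      rcases Finset.mem_insert.mp hb with rfl | hb
      · exact h2 _ h4
      · have := Finset.mem_of_mem_erase (hB hb)
        simpa [rgPos] using this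
    · have t1 : ∑ b ∈ B, (m + 1 - w b) + ∑ b ∈ B, w b = (j - 1) * (m + 1) := by
        rw [← Finset.sum_add_distrib, ← hBc, Finset.card_eq_sum_ones, Finset.sum_mul]
        apply Finset.sum_congr rfl
        intro b _
        have := hwm b
        omega
      rw [Finset.sum_insert hzB]
      obtain ⟨i, rfl⟩ : ∃ i, j = i + 1 := ⟨j - 1, by omega⟩
      simp only [Nat.add_sub_cancel] at t1 hmu
      have t2 : (i + 1) * (2 * m + 1) = 2 * (i * (m + 1)) + 2 * m + 1 - i + 2 * i - 2 * i := by
        have : (i + 1) * (2 * m + 1) + i = 2 * (i * (m + 1)) + 2 * m + 1 := by ring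
        omega
      have t3 : (i + 1) * (2 * m + 1) + i = 2 * (i * (m + 1)) + 2 * m + 1 := by ring
      clear t2
      have := hwm z
      omega

/-- opening phase, opponent to move -/
def rgInv1 {ι : Type} [Fintype ι] (j : ℕ) (z : ι) (w k : ι → ℕ) : Prop :=
  ∃ wm : ι → ℕ, (∀ b, wm b ≤ w b) ∧ (∀ b, 0 < wm b → k b < w b) ∧
    (∀ b, b ≠ z → wm b ≤ k b + 1) ∧ 0 < wm z ∧ (rgSup wm).card ≤ j ∧
    ∑ b, w b + ∑ b, k b + 1 = 2 * ∑ b, wm b ∧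
    (((rgPos k w).card < (rgPos w k).card ∧ wm z ≤ k z + 1) ∨
     (j ≤ (rgPos w k).card ∧ ∑ b, wm b < 6 * j))

/-- opening phase, Player 1 to move -/
def rgMid1 {ι : Type} [Fintype ι] (j : ℕ) (z : ι) (w k : ι → ℕ) : Prop :=
  ∃ wm : ι → ℕ, ∃ b0 : ι, (∀ b, wm b ≤ w b) ∧
    (∀ b, 0 < wm b → k b < w b ∨ (b = b0 ∧ k b = w b)) ∧
    (∀ b, b ≠ z → wm b ≤ k b + 1) ∧ 0 < wm z ∧ (rgSup wm).card ≤ j ∧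
    ∑ b, w b + ∑ b, k b = 2 * ∑ b, wm b ∧
    (((rgPos k w).card ≤ (rgPos w k).card ∧ wm z ≤ k z + 1) ∨
     ((j ≤ (rgPos w k).card ∨ (j ≤ (rgPos w k).card + 1 ∧ ∃ b, w b = k b)) ∧
       ∑ b, wm b < 6 * j))

theorem rg_inv1_W {ι : Type} [Fintype ι] [DecidableEq ι] {j : ℕ} {z : ι} {w k : ι → ℕ}
    (h : rgInv1 j z w k) (c : ι) : rgMid1 j z (rgInc w c) k := by
  obtain ⟨wm, h1, h2, h3, h4, h5, h6, h7⟩ := h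
  have st := rg_stepW w k c
  refine ⟨wm, c, fun b => (h1 b).trans (rgInc_le w c b),
    fun b hb => Or.inl ((h2 b hb).trans_le (rgInc_le w c b)), h3, h4, h5, ?_, ?_⟩
  · rw [rgInc_sum]; omega
  · rcases h7 with h7 | h7
    · left; exact ⟨by omega, h7.2⟩
    · right; exact ⟨Or.inl (by omega), h7.2⟩

theorem rg_inv1_B {ι : Type} [Fintype ι] [DecidableEq ι] {j : ℕ} {z : ι} {w k : ι → ℕ}
    (h : rgInv1 j z w k) (c : ι) : rgMid1 j z w (rgInc k c) := by
  obtain ⟨wm, h1, h2, h3, h4, h5, h6, h7⟩ := h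
  have st := rg_stepB w k c
  refine ⟨wm, c, h1, ?_, ?_, h4, h5, ?_, ?_⟩
  · intro b hb
    have := h2 b hb
    by_cases hbc : b = c
    · subst hbc
      rw [rgInc_self]; simp only [true_and]; omega
    · rw [rgInc_ne k hbc]; exact Or.inl this
  · intro b hb
    have := h3 b hb
    have := rgInc_le k c b
    omega
  · rw [rgInc_sum]; omega
  · rcases h7 with h7 | h7
    · left
      have := rgInc_le k c z
      exact ⟨by omega, by omega⟩
    · right
      refine ⟨?_, h7.2⟩
      rcases st with st | st
      · left; omega
      · right; exact ⟨by omega, c, st.2.2⟩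

/-- playing white on a balanced bin in the opening phase -/
theorem rg_reply_zero {ι : Type} [Fintype ι] [DecidableEq ι] {j m : ℕ} {w k wm : ι → ℕ} {z : ι}
    (hcard : Fintype.card ι = 2 * j) (hm : 14 * j < m) (b : ι) (hb : w b = k b)
    (h1 : ∀ b, wm b ≤ w b) (h2 : ∀ i, i ≠ b → 0 < wm i → k i < w i)
    (h3 : ∀ b, b ≠ z → wm b ≤ k b + 1) (h4 : 0 < wm z)
    (h5 : (rgSup (rgInc wm b)).card ≤ j) (h6 : ∑ b, w b + ∑ b, k b = 2 * ∑ b, wm b)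
    (h7 : ((rgPos k w).card ≤ (rgPos w k).card ∧ wm z ≤ k z + 1) ∨
      (j ≤ (rgPos w k).card + 1 ∧ ∑ b, wm b < 6 * j)) :
    rgInv1 j z (rgInc w b) k ∨ rgInv2 j m (rgInc w b) k := by
  have hz := rg_zeroW w k b hb
  have st := rg_stepW w k b
  have hwmb := h1 b
  have g1 : ∀ i, rgInc wm b i ≤ rgInc w b i := by
    intro i
    have := h1 i
    simp only [rgInc]; omega
  have g2 : ∀ i, 0 < rgInc wm b i → k i < rgInc w b i := by
    intro i hi
    by_cases hib : i = b
    · subst hib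
      rw [rgInc_self]; omega
    · rw [rgInc_ne _ hib] at hi ⊢; exact h2 i hib hi
  have g3 : ∀ i, i ≠ z → rgInc wm b i ≤ k i + 1 := by
    intro i hi
    by_cases hib : i = b
    · subst hib
      rw [rgInc_self]; omega
    · rw [rgInc_ne _ hib]; exact h3 i hi
  have g4 : 0 < rgInc wm b z := h4.trans_le (rgInc_le _ _ _)
  have g6 : ∑ i, rgInc w b i + ∑ i, k i + 1 = 2 * ∑ i, rgInc wm b i := by
    rw [rgInc_sum, rgInc_sum]; omega
  have gT := rgInc_sum wm b
  rcases h7 with h7 | h7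
  · left
    refine ⟨_, g1, g2, g3, g4, h5, g6, Or.inl ⟨by omega, ?_⟩⟩
    by_cases hib : z = b
    · subst hib
      rw [rgInc_self]; omega
    · rw [rgInc_ne _ hib]; exact h7.2
  · by_cases hT : ∑ i, rgInc wm b i < 6 * j
    · left
      exact ⟨_, g1, g2, g3, g4, h5, g6, Or.inr ⟨by omega, hT⟩⟩
    · right
      exact rg_choose2 hcard hm g1 g2 g3 g4 h5 g6 (by omega) (by omega)

theorem rg_sup_inc_of_mem {ι : Type} [Fintype ι] [DecidableEq ι] (wm : ι → ℕ) (b : ι)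
    (hb : 0 < wm b) : rgSup (rgInc wm b) = rgSup wm := by
  ext i
  simp only [rgSup, Finset.mem_filter, Finset.mem_univ, true_and]
  by_cases hib : i = b
  · subst hib
    rw [rgInc_self]; omega
  · rw [rgInc_ne _ hib]

theorem rg_sup_inc_le {ι : Type} [Fintype ι] [DecidableEq ι] (wm : ι → ℕ) (b : ι) :
    (rgSup (rgInc wm b)).card ≤ (rgSup wm).card + 1 := by
  have : rgSup (rgInc wm b) ⊆ insert b (rgSup wm) := by
    intro i hi
    by_cases hib : i = b
    · simp [hib]
    · simp only [rgSup, Finset.mem_filter, Finset.mem_univ, true_and, Finset.mem_insert] at hi ⊢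
      rw [rgInc_ne _ hib] at hi; exact Or.inr hi
  exact (Finset.card_le_card this).trans (Finset.card_insert_le _ _)

/-- in the opening phase white balls remain -/
theorem rg_mid1_lt {ι : Type} [Fintype ι] [DecidableEq ι] {j m : ℕ} {z : ι} {w k : ι → ℕ}
    (hj : 0 < j) (hm : 14 * j < m) (h : rgMid1 j z w k) (hcap : ∀ b, w b + k b ≤ 2 * m + 1) :
    ∑ i, w i < j * (2 * m + 1) := by
  obtain ⟨wm, b0, h1, h2, h3, h4, h5, h6, h7⟩ := h
  rcases h7 with h7 | h7
  · have h3' : ∀ b, wm b ≤ k b + 1 := by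
      intro b
      by_cases hb : b = z
      · rw [hb]; exact h7.2
      · exact h3 b hb
    have e : ∑ b ∈ rgSup wm, wm b = ∑ b, wm b := by
      apply Finset.sum_subset (Finset.subset_univ _)
      intro b _ hb
      by_contra hne
      exact hb (by simp only [rgSup, Finset.mem_filter, Finset.mem_univ, true_and]; omega)
    have a1 := rg_sum_wm (wm := wm) (k := k) Finset.univ (fun b _ => h3' b)
    rw [Finset.univ_inter] at a1
    have a2 : ∑ b ∈ rgSup wm, wm b ≤ (rgSup wm).card * (m + 1) := by
      rw [← smul_eq_mul]
      apply Finset.sum_le_card_nsmul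
      intro b hb
      have hb' : 0 < wm b := by simpa [rgSup] using hb
      have := h2 b hb'
      have := h3' b
      have := hcap b
      omega
    have a3 : (rgSup wm).card * (m + 1) ≤ j * (m + 1) := Nat.mul_le_mul_right _ h5
    have a4 : j * (m + 1) + j < j * (2 * m + 1) := by nlinarith
    omega
  · have : 14 * j ≤ j * (2 * m + 1) := by nlinarith
    omega

/-- reply in the opening phase -/
theorem rg_mid1_reply {ι : Type} [Fintype ι] [DecidableEq ι] {j m : ℕ} {z : ι} {w k : ι → ℕ}
    (hj : 0 < j) (hm : 14 * j < m) (h : rgMid1 j z w k) (hcap : ∀ b, w b + k b ≤ 2 * m + 1)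
    (hcard : Fintype.card ι = 2 * j) :
    rgMid2 j m w k ∨ ∃ b, w b + k b < 2 * m + 1 ∧
      (rgInv1 j z (rgInc w b) k ∨ rgInv2 j m (rgInc w b) k) := by
  obtain ⟨wm, b0, h1, h2, h3, h4, h5, h6, h7⟩ := h
  have hbeta : ((rgPos k w).card ≤ (rgPos w k).card ∧ wm z ≤ k z + 1) ∨
      (j ≤ (rgPos w k).card + 1 ∧ ∑ b, wm b < 6 * j) := by
    rcases h7 with h7 | h7
    · exact Or.inl h7
    · right
      refine ⟨?_, h7.2⟩
      rcases h7.1 with h | h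
      · omega
      · exact h.1
  by_cases c1 : ∃ b, 0 < wm b ∧ w b = k b
  · right
    obtain ⟨b, hb1, hb2⟩ := c1
    refine ⟨b, by have := hcap b; omega, ?_⟩
    apply rg_reply_zero hcard hm b hb2 h1 _ h3 h4 _ h6 hbeta
    · intro i hi hwi
      rcases h2 i hwi with h | ⟨h, _⟩
      · exact h
      · rcases h2 b hb1 with h' | ⟨h', _⟩
        · omega
        · exact absurd (h.trans h'.symm) hi
    · rw [rg_sup_inc_of_mem _ _ hb1]; exact h5
  have hpos : ∀ b, 0 < wm b → k b < w b := by
    intro b hb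
    rcases h2 b hb with h | ⟨_, h⟩
    · exact h
    · exact absurd ⟨b, hb, h.symm⟩ c1
  by_cases c2 : (rgPos w k).card < j
  · right
    have hzero : ∃ b, w b = k b := by
      rcases h7 with h7 | h7
      · by_contra hcon
        push Not at hcon
        have hu : (Finset.univ : Finset ι) ⊆ rgPos w k ∪ rgPos k w := by
          intro b _
          have := hcon b
          simp only [rgPos, Finset.mem_union, Finset.mem_filter, Finset.mem_univ, true_and]
          omega
        have := (Finset.card_le_card hu).trans (Finset.card_union_le _ _)
        rw [Finset.card_univ, hcard] at this
        omega
      · rcases h7.1 with h | h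
        · omega
        · exact h.2
    obtain ⟨b, hb⟩ := hzero
    refine ⟨b, by have := hcap b; omega, ?_⟩
    apply rg_reply_zero hcard hm b hb h1 (fun i _ => hpos i) h3 h4 _ h6 hbeta
    have hs : (rgSup wm).card ≤ (rgPos w k).card := by
      apply Finset.card_le_card
      intro b hb
      simp only [rgSup, rgPos, Finset.mem_filter, Finset.mem_univ, true_and] at hb ⊢
      exact hpos b hb
    have := rg_sup_inc_le wm b
    omega
  · have hP : j ≤ (rgPos w k).card := by omega
    by_cases c3 : wm z ≤ k z + 1 ∧ j ≤ ∑ b, k b + 1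
    · left
      obtain ⟨A, hA, hp, hs⟩ := rg_choose (m := m) h1 hpos h5 hP (fun b => by
        by_cases hb : 0 < wm b
        · have := hpos b hb
          have := hcap b
          have : wm b ≤ k b + 1 := by
            by_cases hbz : b = z
            · rw [hbz]; exact c3.1
            · exact h3 b hbz
          omega
        · omega)
      refine ⟨A, z, hA, fun b hb => Or.inr (Or.inl (hp b hb)), ?_⟩
      have : j * (2 * m + 1) + j = 2 * (j * (m + 1)) := by ring
      omega
    · right
      have hT : ∑ b, wm b < 6 * j := by
        rcases h7 with h7 | h7
        · have a1 := rg_sum_wm (wm := wm) (k := k) Finset.univ (fun b _ => by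
            by_cases hbz : b = z
            · rw [hbz]; exact h7.2
            · exact h3 b hbz)
          rw [Finset.univ_inter] at a1
          omega
        · exact h7.2
      refine ⟨z, ?_, ?_⟩
      · have e1 : w z ≤ ∑ b, w b := Finset.single_le_sum (f := w) (fun _ _ => Nat.zero_le _) (Finset.mem_univ z)
        have e2 : k z ≤ ∑ b, k b := Finset.single_le_sum (f := k) (fun _ _ => Nat.zero_le _) (Finset.mem_univ z)
        omega
      · have st := rg_stepW w k z
        have g1 : ∀ i, rgInc wm z i ≤ rgInc w z i := by
          intro i
          have := h1 i
          simp only [rgInc]; omega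
        have g2 : ∀ i, 0 < rgInc wm z i → k i < rgInc w z i := by
          intro i hi
          by_cases hib : i = z
          · subst hib
            exact (hpos i h4).trans_le (rgInc_le _ _ _)
          · rw [rgInc_ne _ hib] at hi ⊢; exact hpos i hi
        have g3 : ∀ i, i ≠ z → rgInc wm z i ≤ k i + 1 := by
          intro i hi
          rw [rgInc_ne _ hi]; exact h3 i hi
        have g4 : 0 < rgInc wm z z := h4.trans_le (rgInc_le _ _ _)
        have g5 : (rgSup (rgInc wm z)).card ≤ j := by
          rw [rg_sup_inc_of_mem _ _ h4]; exact h5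
        have g6 : ∑ i, rgInc w z i + ∑ i, k i + 1 = 2 * ∑ i, rgInc wm z i := by
          rw [rgInc_sum, rgInc_sum]; omega
        have gT := rgInc_sum wm z
        by_cases hT' : ∑ i, rgInc wm z i < 6 * j
        · left
          exact ⟨_, g1, g2, g3, g4, g5, g6, Or.inr ⟨by omega, hT'⟩⟩
        · right
          exact rg_choose2 hcard hm g1 g2 g3 g4 g5 g6 (by omega) (by omega)

def rgInv {ι : Type} [Fintype ι] (j m : ℕ) (z : ι) (w k : ι → ℕ) : Prop :=
  rgInv1 j z w k ∨ rgInv2 j m w k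

def rgMid {ι : Type} [Fintype ι] (j m : ℕ) (z : ι) (w k : ι → ℕ) : Prop :=
  rgMid1 j z w k ∨ rgMid2 j m w k

theorem rg_inv_W {ι : Type} [Fintype ι] [DecidableEq ι] {j m : ℕ} {z : ι} {w k : ι → ℕ}
    (h : rgInv j m z w k) (c : ι) : rgMid j m z (rgInc w c) k :=
  h.imp (fun h => rg_inv1_W h c) (fun h => rg_inv2_W h c)

theorem rg_inv_B {ι : Type} [Fintype ι] [DecidableEq ι] {j m : ℕ} {z : ι} {w k : ι → ℕ}
    (h : rgInv j m z w k) (c : ι) : rgMid j m z w (rgInc k c) :=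
  h.imp (fun h => rg_inv1_B h c) (fun h => rg_inv2_B h c)

theorem rg_mid_reply {ι : Type} [Fintype ι] [DecidableEq ι] {j m : ℕ} {z : ι} {w k : ι → ℕ}
    (hj : 0 < j) (hm : 14 * j < m)
    (h : rgMid j m z w k) (hcap : ∀ b, w b + k b ≤ 2 * m + 1)
    (hw : ∑ i, w i ≤ j * (2 * m + 1)) (hk : ∑ i, k i ≤ j * (2 * m + 1))
    (hcard : Fintype.card ι = 2 * j)
    (hno : ∑ i, w i + ∑ i, k i < 2 * (j * (2 * m + 1))) :
    ∃ b, w b + k b < 2 * m + 1 ∧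
      ((∑ i, w i < j * (2 * m + 1) ∧ rgInv j m z (rgInc w b) k) ∨
       (∑ i, k i < j * (2 * m + 1) ∧ rgInv j m z w (rgInc k b))) := by
  have main2 : rgMid2 j m w k → ∃ b, w b + k b < 2 * m + 1 ∧
      ((∑ i, w i < j * (2 * m + 1) ∧ rgInv j m z (rgInc w b) k) ∨
       (∑ i, k i < j * (2 * m + 1) ∧ rgInv j m z w (rgInc k b))) := by
    intro h
    obtain ⟨b, hb, hh⟩ := rg_mid2_reply h hcap hw hk hcard hno
    exact ⟨b, hb, hh.imp (fun h => ⟨h.1, Or.inr h.2⟩) (fun h => ⟨h.1, Or.inr h.2⟩)⟩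
  rcases h with h | h
  · rcases rg_mid1_reply hj hm h hcap hcard with h' | ⟨b, hb, hh⟩
    · exact main2 h'
    · exact ⟨b, hb, Or.inl ⟨rg_mid1_lt hj hm h hcap, hh⟩⟩
  · exact main2 h

theorem rg_mid_end {ι : Type} [Fintype ι] [DecidableEq ι] {j m : ℕ} {z : ι} {w k : ι → ℕ}
    (hj : 0 < j) (hm : 14 * j < m)
    (h : rgMid j m z w k) (hcap : ∀ b, w b + k b ≤ 2 * m + 1)
    (hw : ∑ i, w i = j * (2 * m + 1)) :
    j ≤ (Finset.univ.filter (fun b => m + 1 ≤ w b)).card := by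
  rcases h with h | ⟨A, b0, hA, hp, hs⟩
  · have := rg_mid1_lt hj hm h hcap
    omega
  · rw [← hA]
    apply Finset.card_le_card
    intro b hb
    have h0 : ∑ b ∈ A, (m + 1 - w b) = 0 := by omega
    have := Finset.sum_eq_zero_iff.mp h0 b hb
    simp only [Finset.mem_filter, Finset.mem_univ, true_and]
    omega

theorem rg_start {ι : Type} [Fintype ι] [DecidableEq ι] {j m : ℕ} (hj : 0 < j) (z : ι) :
    rgInv j m z (rgInc (fun _ => 0) z) (fun _ => 0) := by
  left
  refine ⟨rgInc (fun _ => 0) z, fun b => le_rfl, fun b h => h, ?_, ?_, ?_, ?_, Or.inl ⟨?_, ?_⟩⟩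
  · intro b hb
    rw [rgInc_ne _ hb]; omega
  · rw [rgInc_self]; omega
  · refine (rg_sup_inc_le _ z).trans ?_
    simp [rgSup]; omega
  · rw [rgInc_sum]; simp
  · have h1 : (rgPos (fun _ => 0) (rgInc (fun _ => 0) z)).card = 0 := by simp [rgPos]
    have h2 := rg_zeroW (fun _ => 0) (fun _ => 0) z rfl
    omega
  · rw [rgInc_self]

theorem rg_w_true {j : ℕ} (h : List (Move j)) (b : Fin (2*j)) :
    whitesIn j ((true, b) :: h) = rgInc (whitesIn j h) b := by
  funext i
  simp only [whitesIn, rgInc, List.countP_cons]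
  by_cases hib : i = b
  · simp [hib]
  · simp [hib, Ne.symm hib]

theorem rg_w_false {j : ℕ} (h : List (Move j)) (b : Fin (2*j)) :
    whitesIn j ((false, b) :: h) = whitesIn j h := by
  funext i
  simp [whitesIn, List.countP_cons]

theorem rg_k_false {j : ℕ} (h : List (Move j)) (b : Fin (2*j)) :
    blacksIn j ((false, b) :: h) = rgInc (blacksIn j h) b := by
  funext i
  simp only [blacksIn, rgInc, List.countP_cons]
  by_cases hib : i = b
  · simp [hib]
  · simp [hib, Ne.symm hib]

theorem rg_k_true {j : ℕ} (h : List (Move j)) (b : Fin (2*j)) :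
    blacksIn j ((true, b) :: h) = blacksIn j h := by
  funext i
  simp [blacksIn, List.countP_cons]

theorem rg_sum_w {j : ℕ} (h : List (Move j)) :
    ∑ b, whitesIn j h b = h.countP (fun x => x.1 == true) := by
  induction h with
  | nil => simp [whitesIn]
  | cons mv h ih =>
    obtain ⟨c, b⟩ := mv
    cases c
    · rw [rg_w_false, ih]; simp
    · rw [rg_w_true, rgInc_sum, ih]; simp

theorem rg_sum_k {j : ℕ} (h : List (Move j)) :
    ∑ b, blacksIn j h b = h.countP (fun x => x.1 == false) := by
  induction h with
  | nil => simp [blacksIn]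
  | cons mv h ih =>
    obtain ⟨c, b⟩ := mv
    cases c
    · rw [rg_k_false, rgInc_sum, ih]; simp
    · rw [rg_k_true, ih]; simp

theorem rg_bin {j : ℕ} (h : List (Move j)) (i : Fin (2*j)) :
    h.countP (fun x => x.2 == i) = whitesIn j h i + blacksIn j h i := by
  induction h with
  | nil => simp [blacksIn, whitesIn]
  | cons mv h ih =>
    obtain ⟨c, b⟩ := mv
    cases c
    · rw [rg_k_false, rg_w_false, List.countP_cons, ih]
      by_cases hib : i = b
      · simp [rgInc, hib]; omega
      · simp [rgInc, hib, Ne.symm hib]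
    · rw [rg_k_true, rg_w_true, List.countP_cons, ih]
      by_cases hib : i = b
      · simp [rgInc, hib]; omega
      · simp [rgInc, hib, Ne.symm hib]

theorem rg_length {j : ℕ} (h : List (Move j)) :
    ∑ b, whitesIn j h b + ∑ b, blacksIn j h b = h.length := by
  induction h with
  | nil => simp [blacksIn, whitesIn]
  | cons mv h ih =>
    obtain ⟨c, b⟩ := mv
    cases c
    · rw [rg_k_false, rg_w_false, rgInc_sum, List.length_cons]; omega
    · rw [rg_k_true, rg_w_true, rgInc_sum, List.length_cons]; omega

theorem rg_hist_length {j : ℕ} (s1 s2 : Strat j) (n : ℕ) : (hist j s1 s2 n).length = n := by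
  induction n with
  | zero => simp [hist]
  | succ n ih => simp [hist, ih]

theorem rg_legal_true {j m : ℕ} (h : List (Move j)) (b : Fin (2*j)) :
    legalMove j m h (true, b) ↔ ∑ i, whitesIn j h i < j * (2*m+1) ∧
      whitesIn j h b + blacksIn j h b < 2*m+1 := by
  rw [rg_sum_w, ← rg_bin]; rfl

theorem rg_legal_false {j m : ℕ} (h : List (Move j)) (b : Fin (2*j)) :
    legalMove j m h (false, b) ↔ ∑ i, blacksIn j h i < j * (2*m+1) ∧
      whitesIn j h b + blacksIn j h b < 2*m+1 := by
  rw [rg_sum_k, ← rg_bin]; rfl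

/-- well-formed position -/
def rgWF (j m : ℕ) (h : List (Move j)) : Prop :=
  (∀ b, whitesIn j h b + blacksIn j h b ≤ 2*m+1) ∧
    ∑ i, whitesIn j h i ≤ j * (2*m+1) ∧ ∑ i, blacksIn j h i ≤ j * (2*m+1)

theorem rgWF_cons {j m : ℕ} {h : List (Move j)} {mv : Move j} (hw : rgWF j m h)
    (hl : legalMove j m h mv) : rgWF j m (mv :: h) := by
  obtain ⟨c, b⟩ := mv
  obtain ⟨h1, h2, h3⟩ := hw
  cases c
  · rw [rg_legal_false] at hl
    refine ⟨?_, ?_, ?_⟩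
    · intro i
      rw [rg_w_false, rg_k_false]
      by_cases hib : i = b
      · subst hib
        rw [rgInc_self]; omega
      · rw [rgInc_ne _ hib]; exact h1 i
    · rw [rg_w_false]; exact h2
    · rw [rg_k_false, rgInc_sum]; omega
  · rw [rg_legal_true] at hl
    refine ⟨?_, ?_, ?_⟩
    · intro i
      rw [rg_w_true, rg_k_true]
      by_cases hib : i = b
      · subst hib
        rw [rgInc_self]; omega
      · rw [rgInc_ne _ hib]; exact h1 i
    · rw [rg_w_true, rgInc_sum]; omega
    · rw [rg_k_true]; exact h3

theorem rg_exists_bin {j m : ℕ} {h : List (Move j)} (hl : h.length < 2*j*(2*m+1)) :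
    ∃ b, whitesIn j h b + blacksIn j h b < 2*m+1 := by
  by_contra hcon
  push Not at hcon
  have h1 : ∑ b : Fin (2*j), (2 * m + 1) ≤ ∑ b, (whitesIn j h b + blacksIn j h b) :=
    Finset.sum_le_sum fun b _ => hcon b
  have h2 : ∑ b, (whitesIn j h b + blacksIn j h b) =
    ∑ b, whitesIn j h b + ∑ b, blacksIn j h b := Finset.sum_add_distrib
  rw [h2, rg_length] at h1
  simp only [Finset.sum_const, Finset.card_univ, Fintype.card_fin, smul_eq_mul] at h1
  omega

theorem rg_exists_legal {j m : ℕ} {h : List (Move j)} (hl : h.length < 2*j*(2*m+1)) :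
    ∃ mv, legalMove j m h mv := by
  obtain ⟨b, hb⟩ := rg_exists_bin hl
  have hlen := rg_length h
  rw [mul_assoc] at hl
  by_cases hw : ∑ i, whitesIn j h i < j * (2*m+1)
  · exact ⟨(true, b), (rg_legal_true h b).mpr ⟨hw, hb⟩⟩
  · exact ⟨(false, b), (rg_legal_false h b).mpr ⟨by omega, hb⟩⟩

/-- the strategy that moves into `I` if possible, and otherwise plays any legal move -/
noncomputable def rgPick (j m : ℕ) (I : List (Move j) → Prop) (d : Move j) : Strat j :=
  fun h => by
    classical
    exact if h1 : ∃ mv, legalMove j m h mv ∧ I (mv :: h) then h1.choose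
      else if h2 : ∃ mv, legalMove j m h mv then h2.choose else d

theorem rgPick_legal {j m : ℕ} (I : List (Move j) → Prop) (d : Move j) {h : List (Move j)}
    (hl : h.length < 2*j*(2*m+1)) : legalMove j m h (rgPick j m I d h) := by
  have h2 : ∃ mv, legalMove j m h mv := rg_exists_legal hl
  by_cases h1 : ∃ mv, legalMove j m h mv ∧ I (mv :: h)
  · simp only [rgPick, dif_pos h1]; exact h1.choose_spec.1
  · simp only [rgPick, dif_neg h1, dif_pos h2]; exact h2.choose_spec

theorem rgPick_inv {j m : ℕ} (I : List (Move j) → Prop) (d : Move j) {h : List (Move j)}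
    (h1 : ∃ mv, legalMove j m h mv ∧ I (mv :: h)) : I (rgPick j m I d h :: h) := by
  simp only [rgPick, dif_pos h1]; exact h1.choose_spec.2

theorem rg_p1Legal {j m : ℕ} (I : List (Move j) → Prop) (d : Move j) (s2 : Strat j) :
    p1Legal j m (rgPick j m I d) s2 := by
  intro n hn _
  exact rgPick_legal I d (by rw [rg_hist_length]; exact hn)

theorem rg_p2Legal {j m : ℕ} (I : List (Move j) → Prop) (d : Move j) (s1 : Strat j) :
    p2Legal j m s1 (rgPick j m I d) := by
  intro n hn _
  exact rgPick_legal I d (by rw [rg_hist_length]; exact hn)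

theorem rg_hist_even {j : ℕ} (s1 s2 : Strat j) {n : ℕ} (hn : n % 2 = 0) :
    hist j s1 s2 (n+1) = s1 (hist j s1 s2 n) :: hist j s1 s2 n := by
  simp [hist, hn]

theorem rg_hist_odd {j : ℕ} (s1 s2 : Strat j) {n : ℕ} (hn : n % 2 = 1) :
    hist j s1 s2 (n+1) = s2 (hist j s1 s2 n) :: hist j s1 s2 n := by
  simp [hist, hn]

theorem rg_hist_wf {j m : ℕ} {s1 s2 : Strat j} (h1 : p1Legal j m s1 s2) (h2 : p2Legal j m s1 s2)
    (n : ℕ) (hn : n ≤ 2*j*(2*m+1)) : rgWF j m (hist j s1 s2 n) := by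
  induction n with
  | zero => simp [hist, rgWF, whitesIn, blacksIn]
  | succ n ih =>
    have ih' := ih (by omega)
    rcases Nat.mod_two_eq_zero_or_one n with hp | hp
    · rw [rg_hist_even _ _ hp]; exact rgWF_cons ih' (h1 n (by omega) hp)
    · rw [rg_hist_odd _ _ hp]; exact rgWF_cons ih' (h2 n (by omega) hp)

def rgI1 (j m : ℕ) (z : Fin (2*j)) (h : List (Move j)) : Prop :=
  rgInv j m z (whitesIn j h) (blacksIn j h)

def rgI2 (j : ℕ) (h : List (Move j)) : Prop :=
  ∀ b, whitesIn j h b = blacksIn j h (Fin.rev b)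

theorem rg_I1_opp {j m : ℕ} {z : Fin (2*j)} {h : List (Move j)} (hI : rgI1 j m z h) (mv : Move j) :
    rgMid j m z (whitesIn j (mv :: h)) (blacksIn j (mv :: h)) := by
  obtain ⟨c, b⟩ := mv
  cases c
  · rw [rg_w_false, rg_k_false]; exact rg_inv_B hI b
  · rw [rg_w_true, rg_k_true]; exact rg_inv_W hI b

theorem rg_I1_reply {j m : ℕ} (hj : 0 < j) (hm : 14 * j < m) {z : Fin (2*j)} {h : List (Move j)}
    (hM : rgMid j m z (whitesIn j h) (blacksIn j h)) (hw : rgWF j m h)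
    (hl : h.length < 2*j*(2*m+1)) : ∃ mv, legalMove j m h mv ∧ rgI1 j m z (mv :: h) := by
  have hlen := rg_length h
  rw [mul_assoc] at hl
  obtain ⟨b, hb, hh | hh⟩ := rg_mid_reply hj hm hM hw.1 hw.2.1 hw.2.2 (by simp) (by omega)
  · refine ⟨(true, b), (rg_legal_true h b).mpr ⟨hh.1, hb⟩, ?_⟩
    unfold rgI1
    rw [rg_w_true, rg_k_true]; exact hh.2
  · refine ⟨(false, b), (rg_legal_false h b).mpr ⟨hh.1, hb⟩, ?_⟩
    unfold rgI1
    rw [rg_w_false, rg_k_false]; exact hh.2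

theorem rg_I1_hist {j m : ℕ} (hj : 0 < j) (hm : 14 * j < m) (z : Fin (2*j)) (d : Move j)
    (s2 : Strat j) (h2 : p2Legal j m (rgPick j m (rgI1 j m z) d) s2) (n : ℕ)
    (hn : 2 * n + 1 ≤ 2*j*(2*m+1)) : rgI1 j m z (hist j (rgPick j m (rgI1 j m z) d) s2 (2*n+1)) := by
  have wf := rg_hist_wf (rg_p1Legal (m := m) (rgI1 j m z) d s2) h2
  induction n with
  | zero =>
    rw [rg_hist_even _ _ (by omega)]
    apply rgPick_inv
    refine ⟨(true, z), (rg_legal_true _ z).mpr ⟨?_, ?_⟩, ?_⟩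
    · simp [hist, whitesIn]; omega
    · simp [hist, whitesIn, blacksIn]
    · unfold rgI1
      rw [rg_w_true, rg_k_true]
      exact rg_start hj z
  | succ n ih =>
    have ih' := ih (by omega)
    rw [rg_hist_even _ _ (by omega)]
    apply rgPick_inv
    apply rg_I1_reply hj hm _ (wf _ (by omega)) (by rw [rg_hist_length]; omega)
    rw [show 2 * (n + 1) = (2 * n + 1) + 1 by ring, rg_hist_odd _ _ (by omega)]
    exact rg_I1_opp ih' _

theorem rg_p1_final {j m : ℕ} (hj : 0 < j) (hm : 14 * j < m) (z : Fin (2*j)) (d : Move j)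
    (s2 : Strat j) (h2 : p2Legal j m (rgPick j m (rgI1 j m z) d) s2) :
    j ≤ majWhiteCount j m (finalHist j m (rgPick j m (rgI1 j m z) d) s2) := by
  have wf := rg_hist_wf (rg_p1Legal (m := m) (rgI1 j m z) d s2) h2 _ le_rfl
  have hpos : 0 < j * (2*m+1) := Nat.mul_pos hj (by omega)
  have hN : 2*j*(2*m+1) = (2 * (j * (2*m+1) - 1) + 1) + 1 := by rw [mul_assoc]; omega
  have hI := rg_I1_hist hj hm z d s2 h2 (j * (2*m+1) - 1) (by omega)
  have hM : rgMid j m z (whitesIn j (finalHist j m (rgPick j m (rgI1 j m z) d) s2))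
      (blacksIn j (finalHist j m (rgPick j m (rgI1 j m z) d) s2)) := by
    unfold finalHist
    rw [hN, rg_hist_odd _ _ (by omega)]
    exact rg_I1_opp hI _
  have hlen := rg_length (hist j (rgPick j m (rgI1 j m z) d) s2 (2*j*(2*m+1)))
  rw [rg_hist_length] at hlen
  have := wf.2
  exact rg_mid_end hj hm hM wf.1 (by
    unfold finalHist
    rw [mul_assoc] at *
    omega)

theorem rg_rev_ne {j : ℕ} (b : Fin (2*j)) : Fin.rev b ≠ b := by
  intro h
  have := congrArg Fin.val h
  rw [Fin.val_rev] at this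
  have := b.isLt
  omega

theorem rg_I2_sum {j : ℕ} {h : List (Move j)} (hI : rgI2 j h) :
    ∑ b, whitesIn j h b = ∑ b, blacksIn j h b := by
  rw [← Equiv.sum_comp Fin.revPerm (blacksIn j h)]
  exact Finset.sum_congr rfl fun b _ => hI b

theorem rg_I2_reply {j m : ℕ} {h : List (Move j)} (hI : rgI2 j h) (mv : Move j)
    (hl : legalMove j m h mv) :
    ∃ mv', legalMove j m (mv :: h) mv' ∧ rgI2 j (mv' :: mv :: h) := by
  have hs := rg_I2_sum hI
  obtain ⟨c, b⟩ := mv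
  have e1 := hI b
  have e2 := hI (Fin.rev b)
  rw [Fin.rev_rev] at e2
  cases c
  · rw [rg_legal_false] at hl
    refine ⟨(true, Fin.rev b), (rg_legal_true _ _).mpr ⟨?_, ?_⟩, ?_⟩
    · rw [rg_w_false]; omega
    · rw [rg_w_false, rg_k_false, rgInc_ne _ (rg_rev_ne b)]; omega
    · intro i
      rw [rg_w_true, rg_w_false, rg_k_true, rg_k_false]
      have := hI i
      simp only [rgInc, Fin.rev_eq_iff]
      omega
  · rw [rg_legal_true] at hl
    refine ⟨(false, Fin.rev b), (rg_legal_false _ _).mpr ⟨?_, ?_⟩, ?_⟩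
    · rw [rg_k_true]; omega
    · rw [rg_w_true, rg_k_true, rgInc_ne _ (rg_rev_ne b)]; omega
    · intro i
      rw [rg_w_false, rg_w_true, rg_k_false, rg_k_true]
      have := hI i
      simp only [rgInc, Fin.rev_inj]
      omega

theorem rg_I2_hist {j m : ℕ} (d : Move j)
    (s1 : Strat j) (h1 : p1Legal j m s1 (rgPick j m (rgI2 j) d)) (n : ℕ)
    (hn : 2 * n ≤ 2*j*(2*m+1)) : rgI2 j (hist j s1 (rgPick j m (rgI2 j) d) (2*n)) := by
  induction n with
  | zero => intro b; simp [hist, whitesIn, blacksIn]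
  | succ n ih =>
    have ih' := ih (by omega)
    rw [show 2 * (n + 1) = (2 * n + 1) + 1 by ring, rg_hist_odd _ _ (by omega)]
    apply rgPick_inv
    rw [rg_hist_even _ _ (by omega)]
    exact rg_I2_reply ih' _ (h1 (2 * n) (by omega) (by omega))

theorem rg_final_total {j m : ℕ} {s1 s2 : Strat j} (h1 : p1Legal j m s1 s2)
    (h2 : p2Legal j m s1 s2) :
    majWhiteCount j m (finalHist j m s1 s2) + majBlackCount j m (finalHist j m s1 s2) = 2 * j := by
  have wf := rg_hist_wf h1 h2 _ le_rfl
  have hlen := rg_length (hist j s1 s2 (2*j*(2*m+1)))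
  rw [rg_hist_length] at hlen
  change rgWF j m (finalHist j m s1 s2) at wf
  change ∑ b, whitesIn j (finalHist j m s1 s2) b + ∑ b, blacksIn j (finalHist j m s1 s2) b = _
    at hlen
  generalize finalHist j m s1 s2 = h at *
  have hfull : ∀ b, whitesIn j h b + blacksIn j h b = 2*m+1 := by
    have hh : ∑ b, (whitesIn j h b + blacksIn j h b) = ∑ b : Fin (2*j), (2*m+1) := by
      rw [Finset.sum_add_distrib, hlen]; simp
    intro b
    exact (Finset.sum_eq_sum_iff_of_le (fun b _ => wf.1 b)).mp hh b (Finset.mem_univ b)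
  have hb : majBlackCount j m h =
      (Finset.univ.filter (fun b : Fin (2*j) => ¬ m+1 ≤ whitesIn j h b)).card := by
    unfold majBlackCount
    congr 1
    apply Finset.filter_congr
    intro b _
    have := hfull b
    omega
  rw [hb]
  unfold majWhiteCount
  rw [Finset.card_filter_add_card_filter_not]
  simp

theorem rg_p2_final {j m : ℕ} (d : Move j)
    (s1 : Strat j) (h1 : p1Legal j m s1 (rgPick j m (rgI2 j) d)) :
    j ≤ majBlackCount j m (finalHist j m s1 (rgPick j m (rgI2 j) d)) := by
  have ht := rg_final_total h1 (rg_p2Legal (rgI2 j) d s1)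
  have hI := rg_I2_hist d s1 h1 (j * (2*m+1)) (by rw [mul_assoc])
  rw [← mul_assoc] at hI
  change rgI2 j (finalHist j m s1 (rgPick j m (rgI2 j) d)) at hI
  generalize finalHist j m s1 (rgPick j m (rgI2 j) d) = h at *
  have : majWhiteCount j m h = majBlackCount j m h := by
    unfold majWhiteCount majBlackCount
    apply Finset.card_bij (fun b _ => Fin.rev b)
    · intro b hb
      simp only [Finset.mem_filter, Finset.mem_univ, true_and] at hb ⊢
      rw [← hI b]; exact hb
    · intro a _ b _ hab
      exact Fin.rev_inj.mp hab
    · intro b hb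
      simp only [Finset.mem_filter, Finset.mem_univ, true_and] at hb
      refine ⟨Fin.rev b, ?_, Fin.rev_rev b⟩
      simp only [Finset.mem_filter, Finset.mem_univ, true_and]
      rw [hI, Fin.rev_rev]; exact hb
  omega

/-- **Main result.** If `m > 14*j`, then under optimal play the
`(j,m)`-balanced redistricting game ends in a tie: Player 1 has a strategy
guaranteeing at least `j` majority-white bins, Player 2 has a strategy
guaranteeing at least `j` majority-black bins, and when these strategies face
each other the game ends with exactly `j` majority-white and exactly `j`
majority-black bins. -/
theorem optimal_play_is_tie (j m : ℕ) (hj : 0 < j) (hm : 14*j < m) :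
    ∃ s1 s2 : Strat j,
      (∀ s2' : Strat j, p2Legal j m s1 s2' →
        p1Legal j m s1 s2' ∧ j ≤ majWhiteCount j m (finalHist j m s1 s2')) ∧
      (∀ s1' : Strat j, p1Legal j m s1' s2 →
        p2Legal j m s1' s2 ∧ j ≤ majBlackCount j m (finalHist j m s1' s2)) ∧
      majWhiteCount j m (finalHist j m s1 s2) = j ∧
      majBlackCount j m (finalHist j m s1 s2) = j := by
  have z : Fin (2*j) := ⟨0, by omega⟩
  have hp1 := fun s2 => rg_p1Legal (m := m) (rgI1 j m z) (true, z) s2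
  have hp2 := fun s1 => rg_p2Legal (m := m) (rgI2 j) (true, z) s1
  have hf1 := rg_p1_final hj hm z (true, z) _ (hp2 _)
  have hf2 := rg_p2_final (true, z) _ (hp1 (rgPick j m (rgI2 j) (true, z)))
  have ht := rg_final_total (hp1 (rgPick j m (rgI2 j) (true, z))) (hp2 _)
  refine ⟨rgPick j m (rgI1 j m z) (true, z), rgPick j m (rgI2 j) (true, z), ?_, ?_, ?_, ?_⟩
  · intro s2' h
    exact ⟨hp1 s2', rg_p1_final hj hm z _ s2' h⟩
  · intro s1' h
    exact ⟨hp2 s1', rg_p2_final _ s1' h⟩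
  · omega
  · omega
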